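/- arXiv:1306.2133 — 2 statements merged into one kernel-verified Lean document; each statement's English description precedes it below -/
import Mathlib

section
/- Let k ≥ 2 be an integer and set n := k−1. Let q : (0,1] → ℝ be absolutely continuous on every compact subinterval of (0,1] with q(x) = −∫_x^1 q'(t) dt for all x ∈ (0,1], and suppose 0 < ∫₀¹ x^{k−1} q'(x)² dx < ∞. Then ∫₀¹ x^{k−2} q(x)² dx < ∞ and (k−1) ∫₀¹ x^{k−2} q(x)² dx ≤ (4/k) ∫₀¹ x^{k−1} q'(x)² dx. -/
open MeasureTheory Set

lemma gpy_pointwise (m : ℕ) (x p y : ℝ) (hx0 : 0 ≤ x) (hx1 : x ≤ 1) :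
    (((m:ℝ) + 1) * ((m:ℝ) + 2) / 4) * (x ^ m * y ^ 2) ≤ x ^ (m + 1) * p ^ 2 +
      ((((m:ℝ) + 2) / 4) * (((m:ℝ) + 1) * x ^ m + ((m:ℝ) + 2) * x ^ (m + 1)) * (y * y) +
       (((m:ℝ) + 2) / 4) * (x ^ (m + 1) + x ^ (m + 2)) * (p * y + y * p)) := by
  have hxm : 0 ≤ x ^ m := pow_nonneg hx0 m
  set a : ℝ := ((m:ℝ) + 2) / 4 with ha
  have hm : (m:ℝ) + 2 = 4 * a := by rw [ha]; ring
  have hm1 : (m:ℝ) = 4 * a - 2 := by rw [ha]; ring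
  have h1 : 0 ≤ 4 - (1 + x) ^ 2 := by nlinarith
  have key : 0 ≤ x ^ m * (x * (p + a * (1 + x) * y) ^ 2
      + a ^ 2 * x * (4 - (1 + x) ^ 2) * y ^ 2) := by positivity
  rw [hm, hm1]
  have e1 : x ^ (m + 1) = x ^ m * x := pow_succ _ _
  have e2 : x ^ (m + 2) = x ^ m * x ^ 2 := pow_add _ _ _
  rw [e1, e2]
  nlinarith [key]

lemma gpy_truncated (m : ℕ) (q q' : ℝ → ℝ)
    (hloc : ∀ x ∈ Set.Ioc (0:ℝ) 1, IntervalIntegrable q' volume x 1)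
    (hq : ∀ x ∈ Set.Ioc (0:ℝ) 1, q x = -∫ t in x..1, q' t)
    (hfin : IntegrableOn (fun x => x ^ (m + 1) * (q' x) ^ 2) (Set.Ioc 0 1) volume)
    (ε : ℝ) (hε : 0 < ε) (hε1 : ε ≤ 1) :
    IntegrableOn (fun x => x ^ m * (q x) ^ 2) (Set.Ioc ε 1) volume ∧
      (((m:ℝ) + 1) * ((m:ℝ) + 2) / 4) * ∫ x in Set.Ioc ε 1, x ^ m * (q x) ^ 2 ≤
        ∫ x in Set.Ioc (0:ℝ) 1, x ^ (m + 1) * (q' x) ^ 2 := by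
  have hI := hloc ε ⟨hε, hε1⟩
  set Q : ℝ → ℝ := fun x => ∫ t in (1:ℝ)..x, q' t with hQ
  have hqQ : ∀ x ∈ Set.Ioc ε 1, q x = Q x := by
    intro x hx
    rw [hq x ⟨hε.trans hx.1, hx.2⟩, hQ]
    exact (intervalIntegral.integral_symm _ _).symm
  have hQac : AbsolutelyContinuousOnInterval Q ε 1 :=
    hI.absolutelyContinuousOnInterval_intervalIntegral (by simp)
  set W : ℝ → ℝ := fun x => (((m:ℝ) + 2) / 4) * (x ^ (m + 1) + x ^ (m + 2)) with hW
  have hWac : AbsolutelyContinuousOnInterval W ε 1 := by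
    apply ContDiffOn.absolutelyContinuousOnInterval
    apply ContDiff.contDiffOn
    rw [hW]
    fun_prop
  have hFac := hWac.mul (hQac.mul hQac)
  set F := W * (Q * Q) with hF
  have hFint := hFac.integral_deriv_eq_sub
  have hFii := hFac.intervalIntegrable_deriv
  have hder : ∀ᵐ x, x ∈ uIcc ε 1 → deriv F x =
      ((((m:ℝ) + 2) / 4) * (((m:ℝ) + 1) * x ^ m + ((m:ℝ) + 2) * x ^ (m + 1)) * (Q x * Q x) +
       (((m:ℝ) + 2) / 4) * (x ^ (m + 1) + x ^ (m + 2)) * (q' x * Q x + Q x * q' x)) := by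
    filter_upwards [hI.ae_hasDerivAt_integral] with x hx hxm
    have h1 : HasDerivAt Q (q' x) x := hx hxm 1 (by simp)
    have h2 : HasDerivAt W ((((m:ℝ) + 2) / 4) *
        (((m:ℝ) + 1) * x ^ m + ((m:ℝ) + 2) * x ^ (m + 1))) x := by
      have := ((hasDerivAt_pow (m + 1) x).add (hasDerivAt_pow (m + 2) x)).const_mul
        (((m:ℝ) + 2) / 4)
      convert! this using 1
      push_cast
      simp
    exact (h2.mul (h1.mul h1)).deriv
  have hQc : ContinuousOn Q (Icc ε 1) := by
    have := hQac.continuousOn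
    rwa [uIcc_of_le hε1] at this
  have hfQ : IntegrableOn (fun x => x ^ m * (Q x) ^ 2) (Set.Ioc ε 1) volume := by
    apply IntegrableOn.mono_set _ Ioc_subset_Icc_self
    apply ContinuousOn.integrableOn_Icc
    fun_prop
  have hcongr : ∀ x ∈ Set.Ioc ε 1, x ^ m * (Q x) ^ 2 = x ^ m * (q x) ^ 2 := by
    intro x hx; rw [hqQ x hx]
  refine ⟨hfQ.congr_fun hcongr measurableSet_Ioc, ?_⟩
  rw [← setIntegral_congr_fun measurableSet_Ioc hcongr]
  have hsub : Set.Ioc ε 1 ⊆ Set.Ioc 0 1 := Ioc_subset_Ioc_left hε.le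
  have hfin' := hfin.mono_set hsub
  rw [intervalIntegral.integral_of_le hε1] at hFint
  have hFi : IntegrableOn (deriv F) (Set.Ioc ε 1) volume :=
    (intervalIntegrable_iff_integrableOn_Ioc_of_le hε1).1 hFii
  have hF1 : F 1 = 0 := by simp [hF, hQ]
  have hFε : 0 ≤ F ε := by
    have : 0 ≤ W ε := by rw [hW]; positivity
    exact mul_nonneg this (mul_self_nonneg (Q ε))
  calc (((m:ℝ) + 1) * ((m:ℝ) + 2) / 4) * ∫ x in Set.Ioc ε 1, x ^ m * (Q x) ^ 2
      = ∫ x in Set.Ioc ε 1, (((m:ℝ) + 1) * ((m:ℝ) + 2) / 4) * (x ^ m * (Q x) ^ 2) :=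
        (integral_const_mul _ _).symm
    _ ≤ ∫ x in Set.Ioc ε 1, (x ^ (m + 1) * (q' x) ^ 2 + deriv F x) := by
        apply setIntegral_mono_on_ae (hfQ.const_mul _) (hfin'.add hFi) measurableSet_Ioc
        filter_upwards [hder] with x hx hxm
        simp only [Pi.add_apply]
        rw [hx (by rw [uIcc_of_le hε1]; exact Ioc_subset_Icc_self hxm)]
        exact gpy_pointwise m x (q' x) (Q x) (hε.trans hxm.1).le hxm.2
    _ = (∫ x in Set.Ioc ε 1, x ^ (m + 1) * (q' x) ^ 2) + ∫ x in Set.Ioc ε 1, deriv F x :=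
        integral_add hfin' hFi
    _ ≤ ∫ x in Set.Ioc ε 1, x ^ (m + 1) * (q' x) ^ 2 := by
        rw [hFint, hF1]; linarith
    _ ≤ ∫ x in Set.Ioc (0:ℝ) 1, x ^ (m + 1) * (q' x) ^ 2 := by
        apply setIntegral_mono_set hfin _ hsub.eventuallyLE
        filter_upwards [ae_restrict_mem measurableSet_Ioc] with x hx
        have := hx.1.le
        simp only [Pi.zero_apply]
        positivity

/-- For `k ≥ 2`, any admissible `q` (absolutely continuous on compact
subintervals of `(0,1]`, given as `q x = -∫_x^1 q'`, with finite positive weighted energy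
`∫₀¹ x^(k-1) q'(x)² dx`) satisfies `∫₀¹ x^(k-2) q² < ∞` and
`(k-1) ∫₀¹ x^(k-2) q² ≤ (4/k) ∫₀¹ x^(k-1) q'²`. -/
theorem gpy_ratio_le_four_div_k (k : ℕ) (hk : 2 ≤ k) (q q' : ℝ → ℝ)
    (hloc : ∀ x ∈ Set.Ioc (0:ℝ) 1, IntervalIntegrable q' volume x 1)
    (hq : ∀ x ∈ Set.Ioc (0:ℝ) 1, q x = -∫ t in x..1, q' t)
    (hfin : IntegrableOn (fun x => x ^ (k - 1) * (q' x) ^ 2) (Set.Ioc 0 1) volume)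
    (hpos : 0 < ∫ x in Set.Ioc (0:ℝ) 1, x ^ (k - 1) * (q' x) ^ 2) :
    IntegrableOn (fun x => x ^ (k - 2) * (q x) ^ 2) (Set.Ioc 0 1) volume ∧
      ((k : ℝ) - 1) * ∫ x in Set.Ioc (0:ℝ) 1, x ^ (k - 2) * (q x) ^ 2 ≤
        (4 / (k : ℝ)) * ∫ x in Set.Ioc (0:ℝ) 1, x ^ (k - 1) * (q' x) ^ 2 := by
  obtain ⟨m, rfl⟩ := Nat.exists_eq_add_of_le' hk
  simp only [show m + 2 - 1 = m + 1 by omega, show m + 2 - 2 = m by omega] at *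
  set E := ∫ x in Set.Ioc (0:ℝ) 1, x ^ (m + 1) * (q' x) ^ 2 with hE
  set l : ℝ := ((m:ℝ) + 1) * ((m:ℝ) + 2) / 4 with hl
  have hlpos : 0 < l := by rw [hl]; positivity
  have hstep := fun i : ℕ => gpy_truncated m q q' hloc hq hfin (1 / ((i:ℝ) + 1))
    (by positivity) (by rw [div_le_one (by positivity)]; linarith [Nat.cast_nonneg (α := ℝ) i])
  have hint : IntegrableOn (fun x => x ^ m * (q x) ^ 2) (Set.Ioc 0 1) volume := by
    apply integrableOn_Ioc_of_intervalIntegral_norm_bounded_left (I := E / l)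
      (fun i => (hstep i).1) tendsto_one_div_add_atTop_nhds_zero_nat
    refine Filter.Eventually.of_forall fun i => ?_
    rw [le_div_iff₀' hlpos]
    refine le_trans (le_of_eq ?_) (hstep i).2
    congr 1
    apply setIntegral_congr_fun measurableSet_Ioc
    intro x hx
    have h0 : 0 < x := lt_trans (by positivity) hx.1
    exact Real.norm_of_nonneg (by positivity)
  refine ⟨hint, ?_⟩
  have hU : (⋃ i : ℕ, Set.Ioc (1 / ((i:ℝ) + 1)) 1) = Set.Ioc 0 1 := by
    ext x
    simp only [mem_iUnion, mem_Ioc]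
    constructor
    · rintro ⟨i, h1, h2⟩
      exact ⟨lt_trans (by positivity) h1, h2⟩
    · rintro ⟨h1, h2⟩
      obtain ⟨i, hi⟩ := exists_nat_one_div_lt h1
      exact ⟨i, hi, h2⟩
  have hlim := tendsto_setIntegral_of_monotone (μ := volume)
    (f := fun x : ℝ => x ^ m * (q x) ^ 2)
    (s := fun i : ℕ => Set.Ioc (1 / ((i:ℝ) + 1)) 1) (fun i => measurableSet_Ioc)
    (fun i j hij => Ioc_subset_Ioc_left (one_div_le_one_div_of_le (by positivity)
      (by have : (i:ℝ) ≤ j := by exact_mod_cast hij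
          linarith))) (by rw [hU]; exact hint)
  rw [hU] at hlim
  have hfinal := le_of_tendsto' (hlim.const_mul l) (fun i => (hstep i).2)
  push_cast
  rw [div_mul_eq_mul_div, le_div_iff₀ (by positivity)]
  rw [hl] at hfinal
  linarith
end

section
/- Let k ≥ 3 be an integer, n := k−1, m := k−2, and let α := α_{m,1} denote the smallest positive zero of the Bessel function J_m. Define S(k) as the supremum of (k−1)(∫₀¹ x^{k−2} q(x)² dx)/(∫₀¹ x^{k−1} q'(x)² dx) over all q : (0,1] → ℝ that are absolutely continuous on compact subintervals of (0,1] with q(x) = −∫_x^1 q'(t) dt and 0 < ∫₀¹ x^{k−1} q'(x)² dx < ∞. Then S(k) = 4(k−1)/α². Moreover the supremum is attained, and the maximizers are exactly the nonzero constant multiples of q₁(x) := x^{−m/2} J_m(α √x); in particular q₁ is strictly positive on (0,1). -/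
open MeasureTheory Set

/-- The Bessel function of the first kind of integer order `m`, defined by its
everywhere-convergent power series. -/
noncomputable def besselJ (m : ℕ) (x : ℝ) : ℝ :=
  ∑' j : ℕ, ((-1) ^ j / ((Nat.factorial j : ℝ) * (Nat.factorial (m + j) : ℝ))) *
    (x / 2) ^ (m + 2 * j)

/-- A pair `(q, q')` is admissible for the GPY extremal problem: `q` is the indefinite
integral `q x = -∫_x^1 q'` (hence absolutely continuous on compact subintervals of
`(0,1]`), and `0 < ∫₀¹ x^(k-1) q'(x)² dx < ∞`. -/
def GPYAdmissible (k : ℕ) (q q' : ℝ → ℝ) : Prop :=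
  (∀ x ∈ Set.Ioc (0:ℝ) 1, IntervalIntegrable q' volume x 1) ∧
  (∀ x ∈ Set.Ioc (0:ℝ) 1, q x = -∫ t in x..1, q' t) ∧
  IntegrableOn (fun x => x ^ (k - 1) * (q' x) ^ 2) (Set.Ioc 0 1) volume ∧
  0 < ∫ x in Set.Ioc (0:ℝ) 1, x ^ (k - 1) * (q' x) ^ 2

/-- The Goldston–Pintz–Yıldırım ratio of an admissible pair. -/
noncomputable def GPYRatio (k : ℕ) (q q' : ℝ → ℝ) : ℝ :=
  ((k : ℝ) - 1) * (∫ x in Set.Ioc (0:ℝ) 1, x ^ (k - 2) * (q x) ^ 2) /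
    ∫ x in Set.Ioc (0:ℝ) 1, x ^ (k - 1) * (q' x) ^ 2

/-- The entire function `∑ (-1)^j y^j/(j!(m+j)!)`. -/
noncomputable def bF (m : ℕ) (y : ℝ) : ℝ :=
  ∑' j : ℕ, ((-1) ^ j / ((Nat.factorial j : ℝ) * (Nat.factorial (m + j) : ℝ))) * y ^ j

lemma bF_coeff_le (m j : ℕ) :
    |((-1 : ℝ) ^ j / ((Nat.factorial j : ℝ) * (Nat.factorial (m + j) : ℝ)))|
      ≤ 1 / (Nat.factorial j : ℝ) := by
  have h1 : (1 : ℝ) ≤ (Nat.factorial (m + j) : ℝ) := by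
    exact_mod_cast Nat.one_le_iff_ne_zero.mpr (Nat.factorial_ne_zero _)
  have h2 : (0 : ℝ) < (Nat.factorial j : ℝ) := by exact_mod_cast Nat.factorial_pos j
  rw [abs_div, abs_pow, abs_neg, abs_one, one_pow, abs_of_pos (by positivity)]
  apply one_div_le_one_div_of_le h2
  nlinarith

lemma bF_summable (m : ℕ) (y : ℝ) : Summable fun j : ℕ =>
    ((-1 : ℝ) ^ j / ((Nat.factorial j : ℝ) * (Nat.factorial (m + j) : ℝ))) * y ^ j := by
  refine Summable.of_norm_bounded (Real.summable_pow_div_factorial |y|) fun j => ?_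
  rw [Real.norm_eq_abs, abs_mul, abs_pow]
  calc _ ≤ 1 / (Nat.factorial j : ℝ) * |y| ^ j := by
        gcongr
        exact bF_coeff_le m j
    _ = _ := by ring

lemma bF_dsummable_bound (R : ℝ) : Summable fun j : ℕ =>
    1 / (Nat.factorial j : ℝ) * ((j : ℝ) * R ^ (j - 1)) := by
  rw [← summable_nat_add_iff 1]
  refine (Real.summable_pow_div_factorial R).congr fun j => ?_
  have h2 : (0 : ℝ) < (Nat.factorial j : ℝ) := by exact_mod_cast Nat.factorial_pos j
  have h3 : ((j : ℝ) + 1) ≠ 0 := by positivity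
  simp only [Nat.factorial_succ, Nat.cast_mul, Nat.add_sub_cancel]
  push_cast
  field_simp

lemma bF_dterm_le (m j : ℕ) (R y : ℝ) (hy : |y| ≤ R) :
    ‖((-1 : ℝ) ^ j / ((Nat.factorial j : ℝ) * (Nat.factorial (m + j) : ℝ)))
      * ((j : ℝ) * y ^ (j - 1))‖ ≤ 1 / (Nat.factorial j : ℝ) * ((j : ℝ) * R ^ (j - 1)) := by
  rw [Real.norm_eq_abs, abs_mul, abs_mul, abs_pow, Nat.abs_cast]
  gcongr
  exact bF_coeff_le m j

lemma bF_dsum (m : ℕ) (y : ℝ) : HasSum (fun j : ℕ =>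
    ((-1 : ℝ) ^ j / ((Nat.factorial j : ℝ) * (Nat.factorial (m + j) : ℝ)))
      * ((j : ℝ) * y ^ (j - 1))) (-bF (m + 1) y) := by
  rw [← hasSum_nat_add_iff' 1]
  simp only [Finset.range_one, Finset.sum_singleton, Nat.cast_zero, zero_mul, mul_zero, sub_zero]
  have := (bF_summable (m + 1) y).hasSum.neg
  refine this.congr_fun ?_ |> fun h => h
  intro j
  have h2 : (0 : ℝ) < (Nat.factorial j : ℝ) := by exact_mod_cast Nat.factorial_pos j
  have h4 : (0 : ℝ) < (Nat.factorial (m + 1 + j) : ℝ) := by exact_mod_cast Nat.factorial_pos _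
  have h3 : ((j : ℝ) + 1) ≠ 0 := by positivity
  rw [show m + (j + 1) = m + 1 + j by ring]
  simp only [Nat.factorial_succ j, Nat.cast_mul, Nat.add_sub_cancel]
  push_cast
  field_simp
  ring

lemma bF_hasDerivAt (m : ℕ) (y : ℝ) : HasDerivAt (bF m) (-bF (m + 1) y) y := by
  have hy : y ∈ Metric.ball (0 : ℝ) (|y| + 1) := by simp
  have h0 : (0 : ℝ) ∈ Metric.ball (0 : ℝ) (|y| + 1) := by
    simp; positivity
  have := hasDerivAt_tsum_of_isPreconnected (bF_dsummable_bound (|y| + 1)) Metric.isOpen_ball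
    (convex_ball (0 : ℝ) (|y| + 1)).isPreconnected
    (g := fun j z => ((-1 : ℝ) ^ j / ((Nat.factorial j : ℝ) * (Nat.factorial (m + j) : ℝ))) * z ^ j)
    (g' := fun j z => ((-1 : ℝ) ^ j / ((Nat.factorial j : ℝ) * (Nat.factorial (m + j) : ℝ)))
      * ((j : ℝ) * z ^ (j - 1)))
    (fun j z _ => (hasDerivAt_pow j z).const_mul _)
    (fun j z hz => bF_dterm_le m j _ z (by
      have := mem_ball_zero_iff.mp hz
      rw [Real.norm_eq_abs] at this
      exact this.le))
    h0 (bF_summable m 0) hy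
  rw [(bF_dsum m y).tsum_eq] at this
  exact this

lemma bF_rec (m : ℕ) (y : ℝ) :
    bF m y = ((m : ℝ) + 1) * bF (m + 1) y - y * bF (m + 2) y := by
  have h1 := ((bF_summable (m + 1) y).hasSum.mul_left ((m : ℝ) + 1)).add
    ((bF_dsum (m + 1) y).mul_left y)
  have h2 : bF m y = ((m : ℝ) + 1) * bF (m + 1) y + y * (-bF (m + 2) y) := by
    refine HasSum.tsum_eq (h1.congr_fun ?_ |> fun h => h)
    intro j
    have h2 : (0 : ℝ) < (Nat.factorial j : ℝ) := by exact_mod_cast Nat.factorial_pos j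
    have h4 : (0 : ℝ) < (Nat.factorial (m + j) : ℝ) := by exact_mod_cast Nat.factorial_pos _
    have h3 : ((m : ℝ) + j + 1) ≠ 0 := by positivity
    rw [show m + 1 + j = m + j + 1 by ring]
    have h5 : y * ((j : ℝ) * y ^ (j - 1)) = j * y ^ j := by
      cases j with
      | zero => simp
      | succ j => simp [pow_succ]; ring
    rw [mul_left_comm y, h5]
    simp only [Nat.factorial_succ (m + j), Nat.cast_mul]
    push_cast
    field_simp
    ring
  rw [h2]; ring

lemma bF_contDiff (m : ℕ) : ContDiff ℝ 1 (bF m) := by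
  rw [contDiff_one_iff_deriv]
  refine ⟨fun y => (bF_hasDerivAt m y).differentiableAt, ?_⟩
  have : deriv (bF m) = fun y => -bF (m + 1) y := funext fun y => (bF_hasDerivAt m y).deriv
  rw [this]
  exact (continuous_iff_continuousAt.2 fun y => (bF_hasDerivAt (m + 1) y).continuousAt).neg

lemma bF_zero_pos (m : ℕ) : 0 < bF m 0 := by
  have : bF m 0 = 1 / (Nat.factorial m : ℝ) := by
    unfold bF
    rw [tsum_eq_single 0]
    · simp
    · intro j hj
      simp [hj]
  rw [this]
  have := Nat.factorial_pos m
  positivity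

lemma besselJ_eq (m : ℕ) (x : ℝ) : besselJ m x = (x / 2) ^ m * bF m ((x / 2) ^ 2) := by
  unfold besselJ bF
  rw [← tsum_mul_left]
  refine tsum_congr fun j => ?_
  rw [pow_add, pow_mul]; ring

open Filter Topology

/-- Data of the positive first Dirichlet eigenfunction. -/
structure GPYEig (m : ℕ) (lam : ℝ) (u v v' : ℝ → ℝ) : Prop where
  lam_pos : 0 < lam
  du : ∀ x, HasDerivAt u (v x) x
  dv : ∀ x, HasDerivAt v (v' x) x
  cu : ContDiff ℝ 1 u
  cv : ContDiff ℝ 1 v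
  ode : ∀ x, x * v' x + ((m : ℝ) + 1) * v x = -lam * u x
  pos : ∀ x ∈ Set.Ico (0 : ℝ) 1, 0 < u x
  u_one : u 1 = 0

lemma GPYEig.v_neg {m : ℕ} {lam : ℝ} {u v v' : ℝ → ℝ} (h : GPYEig m lam u v v')
    (x : ℝ) (hx : x ∈ Ioc (0 : ℝ) 1) : v x < 0 := by
  have hd : ∀ x, HasDerivAt (fun x => x ^ (m + 1) * v x) (-lam * x ^ m * u x) x := by
    intro x
    have := (hasDerivAt_pow (m + 1) x).mul (h.dv x)
    refine this.congr_deriv ?_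
    have := h.ode x
    simp only [Nat.add_sub_cancel]
    push_cast
    linear_combination x ^ m * this
  have hanti : StrictAntiOn (fun x => x ^ (m + 1) * v x) (Icc 0 1) := by
    refine strictAntiOn_of_deriv_neg (convex_Icc 0 1)
      (fun x _ => (hd x).continuousAt.continuousWithinAt) fun x hx => ?_
    rw [interior_Icc] at hx
    rw [(hd x).deriv]
    have h1 := h.pos x ⟨hx.1.le, hx.2⟩
    have h2 := h.lam_pos
    have h3 := hx.1
    have : 0 < lam * x ^ m * u x := by positivity
    linarith
  have := hanti (left_mem_Icc.2 zero_le_one) ⟨hx.1.le, hx.2⟩ hx.1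
  simp only [ne_eq, Nat.add_eq_zero_iff, one_ne_zero, and_false, not_false_eq_true, zero_pow,
    zero_mul] at this
  have h3 : 0 < x ^ (m + 1) := pow_pos hx.1 _
  by_contra hc
  push Not at hc
  nlinarith [mul_nonneg h3.le hc]

lemma ftc_ac {g g' : ℝ → ℝ} {a b : ℝ} (hg : AbsolutelyContinuousOnInterval g a b)
    (h : ∀ᵐ x, x ∈ uIcc a b → HasDerivAt g (g' x) x) :
    ∫ x in a..b, g' x = g b - g a := by
  rw [← hg.integral_deriv_eq_sub]
  apply intervalIntegral.integral_congr_ae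
  filter_upwards [h] with x hx hx2
  exact (hx (uIoc_subset_uIcc hx2)).deriv.symm

lemma ftc_ac_int {g g' : ℝ → ℝ} {a b : ℝ} (hg : AbsolutelyContinuousOnInterval g a b)
    (h : ∀ᵐ x, x ∈ uIcc a b → HasDerivAt g (g' x) x) :
    IntervalIntegrable g' volume a b := by
  refine hg.intervalIntegrable_deriv.congr_ae ?_
  rw [Filter.EventuallyEq, ae_restrict_iff' measurableSet_uIoc]
  filter_upwards [h] with x hx hx2
  exact (hx (uIoc_subset_uIcc hx2)).deriv

section Energy

variable {m : ℕ} {f : ℝ → ℝ}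

lemma int_ab (hf : ∀ x ∈ Set.Ioc (0:ℝ) 1, IntervalIntegrable f volume x 1)
    {a b : ℝ} (ha : a ∈ Ioc (0 : ℝ) 1) (hb : b ∈ Ioc (0 : ℝ) 1) :
    IntervalIntegrable f volume a b := (hf a ha).trans (hf b hb).symm

lemma Q_deriv (hf : ∀ x ∈ Set.Ioc (0:ℝ) 1, IntervalIntegrable f volume x 1) :
    ∀ᵐ x, x ∈ Ioo (0 : ℝ) 1 → HasDerivAt (fun x => ∫ t in 1..x, f t) (f x) x := by
  have h1 : ∀ n : ℕ, ∀ᵐ x, x ∈ uIcc (1 / ((n : ℝ) + 1)) 1 →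
      ∀ c ∈ uIcc (1 / ((n : ℝ) + 1)) 1, HasDerivAt (fun x => ∫ t in c..x, f t) (f x) x := by
    intro n
    refine (hf _ ⟨by positivity, ?_⟩).ae_hasDerivAt_integral
    rw [div_le_one (by positivity)]
    have : (0 : ℝ) ≤ n := by positivity
    linarith
  filter_upwards [ae_all_iff.2 h1] with x hx hx01
  obtain ⟨n, hn⟩ := exists_nat_one_div_lt hx01.1
  refine hx n ?_ 1 right_mem_uIcc
  rw [uIcc_of_le (hn.le.trans hx01.2.le)]
  exact ⟨hn.le, hx01.2.le⟩

lemma Q_ac (hf : ∀ x ∈ Set.Ioc (0:ℝ) 1, IntervalIntegrable f volume x 1)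
    {a b : ℝ} (ha : a ∈ Ioc (0 : ℝ) 1) (hb : b ∈ Ioc (0 : ℝ) 1) :
    AbsolutelyContinuousOnInterval (fun x => ∫ t in 1..x, f t) a b := by
  have h1 := (hf (min a b) ⟨lt_min ha.1 hb.1, min_le_of_left_le ha.2⟩
    ).absolutelyContinuousOnInterval_intervalIntegral (c := 1) right_mem_uIcc
  refine h1.mono ?_
  rw [uIcc_of_le (min_le_of_left_le ha.2)]
  exact Icc_subset_Icc le_rfl (max_le ha.2 hb.2)

lemma E_int (hE : IntegrableOn (fun x => x ^ (m + 1) * (f x) ^ 2) (Set.Ioc 0 1) volume)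
    {a b : ℝ} (ha : a ∈ Icc (0 : ℝ) 1) (hb : b ∈ Icc (0 : ℝ) 1) :
    IntervalIntegrable (fun x => x ^ (m + 1) * (f x) ^ 2) volume a b := by
  have h : IntervalIntegrable (fun x => x ^ (m + 1) * (f x) ^ 2) volume 0 1 :=
    (intervalIntegrable_iff_integrableOn_Ioc_of_le zero_le_one).2 hE
  refine h.mono_set ?_
  rw [uIcc_of_le zero_le_one]
  exact Icc_subset_Icc (le_min ha.1 hb.1) (max_le ha.2 hb.2)

lemma w_int {x : ℝ} (hx : x ∈ Ioc (0 : ℝ) 1) :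
    IntervalIntegrable (fun t : ℝ => (t ^ (m + 1))⁻¹) volume x 1 := by
  apply ContinuousOn.intervalIntegrable
  rw [uIcc_of_le hx.2]
  refine ContinuousOn.inv₀ (by fun_prop) fun t ht => ?_
  exact pow_ne_zero _ (hx.1.trans_le ht.1).ne'

lemma Q_sq_le (hf : ∀ x ∈ Set.Ioc (0:ℝ) 1, IntervalIntegrable f volume x 1)
    (hE : IntegrableOn (fun x => x ^ (m + 1) * (f x) ^ 2) (Set.Ioc 0 1) volume)
    {x : ℝ} (hx : x ∈ Ioc (0 : ℝ) 1) :
    (∫ t in 1..x, f t) ^ 2 ≤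
      (∫ t in x..1, t ^ (m + 1) * (f t) ^ 2) * ∫ t in x..1, (t ^ (m + 1))⁻¹ := by
  have h1 := E_int hE ⟨hx.1.le, hx.2⟩ (right_mem_Icc.2 zero_le_one)
  have h2 := hf x hx
  have h3 := w_int (m := m) hx
  have key : ∀ s : ℝ, 0 ≤ (∫ t in x..1, t ^ (m + 1) * (f t) ^ 2) * (s * s)
      + (2 * ∫ t in x..1, f t) * s + ∫ t in x..1, (t ^ (m + 1))⁻¹ := by
    intro s
    have : (∫ t in x..1, t ^ (m + 1) * (f t) ^ 2) * (s * s)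
      + (2 * ∫ t in x..1, f t) * s + ∫ t in x..1, (t ^ (m + 1))⁻¹ =
      ∫ t in x..1, ((s * s) * (t ^ (m + 1) * (f t) ^ 2) + (2 * s) * f t + (t ^ (m + 1))⁻¹) := by
      rw [intervalIntegral.integral_add ((h1.const_mul _).add (h2.const_mul _)) h3,
        intervalIntegral.integral_add (h1.const_mul _) (h2.const_mul _),
        intervalIntegral.integral_const_mul, intervalIntegral.integral_const_mul]
      ring
    rw [this]
    refine intervalIntegral.integral_nonneg hx.2 fun t ht => ?_
    have ht0 : 0 < t ^ (m + 1) := pow_pos (hx.1.trans_le ht.1) _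
    have : (s * s) * (t ^ (m + 1) * (f t) ^ 2) + (2 * s) * f t + (t ^ (m + 1))⁻¹
      = (t ^ (m + 1))⁻¹ * (s * t ^ (m + 1) * f t + 1) ^ 2 := by
      field_simp
      ring
    rw [this]
    positivity
  have := discrim_le_zero key
  rw [discrim] at this
  rw [intervalIntegral.integral_symm]
  nlinarith

lemma w_le_inv (hm : 1 ≤ m) {x : ℝ} (hx : x ∈ Ioc (0 : ℝ) 1) :
    ∫ t in x..1, (t ^ (m + 1))⁻¹ ≤ (x ^ m)⁻¹ := by
  have h := integral_zpow (a := x) (b := 1) (n := -((m : ℤ) + 1)) (Or.inr ⟨by omega, by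
    rw [uIcc_of_le hx.2]; intro h; exact absurd h.1 (not_le.2 hx.1)⟩)
  have e : ∀ t : ℝ, (t ^ (m + 1))⁻¹ = t ^ (-((m : ℤ) + 1)) := by
    intro t
    rw [zpow_neg]
    norm_cast
  simp_rw [e]
  rw [h]
  have e2 : x ^ (-((m : ℤ) + 1) + 1) = (x ^ m)⁻¹ := by
    rw [show (-((m : ℤ) + 1) + 1) = -(m : ℤ) by ring, zpow_neg]
    norm_cast
  rw [e2]
  have hxm : 0 < x ^ m := pow_pos hx.1 _
  have hm' : (1 : ℝ) ≤ m := by exact_mod_cast hm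
  push_cast
  rw [one_zpow, show (-((m : ℝ) + 1) + 1) = -m by ring, div_neg, ← neg_div, neg_sub]
  rw [div_le_iff₀ (by linarith)]
  have : 0 < (x ^ m)⁻¹ := by positivity
  nlinarith

lemma w_le_one_sub {x : ℝ} (hx : x ∈ Ioc (0 : ℝ) 1) :
    ∫ t in x..1, (t ^ (m + 1))⁻¹ ≤ (x ^ (m + 1))⁻¹ * (1 - x) := by
  have := intervalIntegral.integral_mono_on hx.2 (w_int (m := m) hx)
    (intervalIntegrable_const (c := (x ^ (m + 1))⁻¹)) (fun t ht => ?_)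
  · refine this.trans_eq ?_
    simp [mul_comm]
  · have := hx.1
    have h1 := ht.1
    gcongr

lemma tail_le (hE : IntegrableOn (fun x => x ^ (m + 1) * (f x) ^ 2) (Set.Ioc 0 1) volume)
    {x : ℝ} (hx : x ∈ Ioc (0 : ℝ) 1) :
    (∫ t in x..1, t ^ (m + 1) * (f t) ^ 2) ≤ ∫ t in Ioc (0:ℝ) 1, t ^ (m + 1) * (f t) ^ 2 := by
  rw [intervalIntegral.integral_of_le hx.2]
  refine setIntegral_mono_set hE ?_ (Ioc_subset_Ioc_left hx.1.le).eventuallyLE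
  filter_upwards [ae_restrict_mem measurableSet_Ioc] with t ht
  have := ht.1
  simp only [Pi.zero_apply]
  positivity

lemma tail_nonneg {x : ℝ} (hx : x ∈ Ioc (0 : ℝ) 1) :
    0 ≤ (∫ t in x..1, t ^ (m + 1) * (f t) ^ 2) := by
  refine intervalIntegral.integral_nonneg hx.2 fun t ht => ?_
  have := hx.1.trans_le ht.1
  positivity

lemma tail_tendsto (hE : IntegrableOn (fun x => x ^ (m + 1) * (f x) ^ 2) (Set.Ioc 0 1) volume) :
    Tendsto (fun x => ∫ t in x..1, t ^ (m + 1) * (f t) ^ 2) (𝓝[<] 1) (𝓝 0) := by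
  have h : ContinuousOn (fun x => ∫ t in 1..x, t ^ (m + 1) * (f t) ^ 2) (Icc 0 1) := by
    have := intervalIntegral.continuousOn_primitive_interval'
      (E_int hE (left_mem_Icc.2 zero_le_one) (right_mem_Icc.2 zero_le_one))
      (a := 1) right_mem_uIcc
    rwa [uIcc_of_le zero_le_one] at this
  have h1 := (h 1 (right_mem_Icc.2 zero_le_one)).tendsto
  rw [intervalIntegral.integral_same] at h1
  have h2 : Tendsto (fun x => ∫ t in 1..x, t ^ (m + 1) * (f t) ^ 2) (𝓝[<] 1) (𝓝 0) := by
    refine h1.mono_left ?_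
    rw [← nhdsWithin_Ioo_eq_nhdsLT (zero_lt_one' ℝ)]
    exact nhdsWithin_mono _ Ioo_subset_Icc_self
  have := h2.neg
  rw [neg_zero] at this
  refine this.congr fun x => ?_
  rw [intervalIntegral.integral_symm]
  simp

lemma V_le (hm : 1 ≤ m) (hf : ∀ x ∈ Set.Ioc (0:ℝ) 1, IntervalIntegrable f volume x 1)
    (hE : IntegrableOn (fun x => x ^ (m + 1) * (f x) ^ 2) (Set.Ioc 0 1) volume)
    {x : ℝ} (hx : x ∈ Ioc (0 : ℝ) 1) :
    x ^ m * (∫ t in 1..x, f t) ^ 2 ≤ ∫ t in Ioc (0:ℝ) 1, t ^ (m + 1) * (f t) ^ 2 := by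
  have h1 := Q_sq_le hf hE hx
  have h2 := w_le_inv hm hx
  have h3 := tail_le hE hx
  have h4 := tail_nonneg (m := m) (f := f) hx
  have hxm : 0 < x ^ m := pow_pos hx.1 _
  calc _ ≤ x ^ m * ((∫ t in x..1, t ^ (m + 1) * (f t) ^ 2) * (x ^ m)⁻¹) := by
        gcongr
        exact h1.trans (mul_le_mul_of_nonneg_left h2 h4)
    _ = (∫ t in x..1, t ^ (m + 1) * (f t) ^ 2) := by field_simp
    _ ≤ _ := h3

lemma Q_contOn (hf : ∀ x ∈ Set.Ioc (0:ℝ) 1, IntervalIntegrable f volume x 1) :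
    ContinuousOn (fun x => ∫ t in 1..x, f t) (Ioc 0 1) := by
  intro x hx
  have h := (Q_ac hf (a := x / 2) (b := 1) ⟨by linarith [hx.1], by linarith [hx.1, hx.2]⟩
    ⟨one_pos, le_rfl⟩).continuousOn
  rw [uIcc_of_le (by linarith [hx.1, hx.2])] at h
  refine (h x ⟨by linarith [hx.1], hx.2⟩).mono_of_mem_nhdsWithin ?_
  rw [mem_nhdsWithin]
  exact ⟨Ioi (x / 2), isOpen_Ioi, by simp [hx.1], fun y hy => ⟨le_of_lt hy.1, hy.2.2⟩⟩

lemma V_int (hm : 1 ≤ m) (hf : ∀ x ∈ Set.Ioc (0:ℝ) 1, IntervalIntegrable f volume x 1)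
    (hE : IntegrableOn (fun x => x ^ (m + 1) * (f x) ^ 2) (Set.Ioc 0 1) volume) :
    IntegrableOn (fun x => x ^ m * (∫ t in 1..x, f t) ^ 2) (Ioc 0 1) volume := by
  refine Integrable.of_bound (C := ∫ t in Ioc (0:ℝ) 1, t ^ (m + 1) * (f t) ^ 2) ?_ ?_
  · have := Q_contOn hf
    exact ((continuous_pow m).continuousOn.mul (this.pow 2)).aestronglyMeasurable measurableSet_Ioc
  · filter_upwards [ae_restrict_mem measurableSet_Ioc] with x hx
    have := hx.1
    rw [Real.norm_eq_abs, abs_of_nonneg (by positivity)]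
    exact V_le hm hf hE hx

end Energy

section Picone

variable {m : ℕ} {lam : ℝ} {u v v' f : ℝ → ℝ}

/-- boundary term -/
noncomputable def bdG (m : ℕ) (u v f : ℝ → ℝ) (x : ℝ) : ℝ :=
  x ^ (m + 1) * v x / u x * ((∫ t in 1..x, f t) * (∫ t in 1..x, f t))

/-- defect -/
noncomputable def bdD (m : ℕ) (u v f : ℝ → ℝ) (x : ℝ) : ℝ :=
  x ^ (m + 1) * (f x - (∫ t in 1..x, f t) * v x / u x) ^ 2

lemma G_zero (hm : 1 ≤ m) (h : GPYEig m lam u v v')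
    (hf : ∀ x ∈ Set.Ioc (0:ℝ) 1, IntervalIntegrable f volume x 1)
    (hE : IntegrableOn (fun x => x ^ (m + 1) * (f x) ^ 2) (Set.Ioc 0 1) volume) :
    Tendsto (bdG m u v f) (𝓝[>] 0) (𝓝 0) := by
  set K := ∫ t in Ioc (0:ℝ) 1, t ^ (m + 1) * (f t) ^ 2
  have hu0 : u 0 ≠ 0 := (h.pos 0 ⟨le_rfl, one_pos⟩).ne'
  have hc : ContinuousAt (fun x => x * |v x / u x| * K) 0 := by
    have h1 : ContinuousAt v 0 := h.cv.continuous.continuousAt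
    have h2 : ContinuousAt u 0 := h.cu.continuous.continuousAt
    exact (continuousAt_id.mul (h1.div h2 hu0).abs).mul continuousAt_const
  have hl : Tendsto (fun x => x * |v x / u x| * K) (𝓝[>] 0) (𝓝 0) := by
    have := hc.tendsto
    simp only [zero_mul] at this
    exact this.mono_left nhdsWithin_le_nhds
  refine squeeze_zero_norm' ?_ hl
  filter_upwards [Ioo_mem_nhdsGT (zero_lt_one' ℝ)] with x hx
  have hV := V_le hm hf hE (x := x) ⟨hx.1, hx.2.le⟩
  have hx0 := hx.1
  have : bdG m u v f x = (x * (v x / u x)) * (x ^ m * (∫ t in 1..x, f t) ^ 2) := by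
    unfold bdG; ring
  rw [this, Real.norm_eq_abs, abs_mul, abs_mul, abs_of_pos hx0,
    abs_of_nonneg (a := x ^ m * _) (by positivity)]
  gcongr

lemma G_one (h : GPYEig m lam u v v')
    (hf : ∀ x ∈ Set.Ioc (0:ℝ) 1, IntervalIntegrable f volume x 1)
    (hE : IntegrableOn (fun x => x ^ (m + 1) * (f x) ^ 2) (Set.Ioc 0 1) volume) :
    Tendsto (bdG m u v f) (𝓝[<] 1) (𝓝 0) := by
  have hv1 := h.v_neg 1 ⟨one_pos, le_rfl⟩
  have hs : Tendsto (slope u 1) (𝓝[<] 1) (𝓝 (v 1)) :=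
    ((hasDerivAt_iff_tendsto_slope.1 (h.du 1))).mono_left
      (nhdsWithin_mono _ fun y hy => ne_of_lt hy)
  have hcv : Tendsto v (𝓝[<] 1) (𝓝 (v 1)) :=
    h.cv.continuous.continuousAt.tendsto.mono_left nhdsWithin_le_nhds
  have hl := ((hcv.div hs hv1.ne).abs).mul (tail_tendsto hE)
  rw [mul_zero] at hl
  refine squeeze_zero_norm' ?_ hl
  filter_upwards [Ioo_mem_nhdsLT (zero_lt_one' ℝ)] with x hx
  have hQ := Q_sq_le hf hE (x := x) ⟨hx.1, hx.2.le⟩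
  have hw := w_le_one_sub (m := m) (x := x) ⟨hx.1, hx.2.le⟩
  have ht := tail_nonneg (m := m) (f := f) (x := x) ⟨hx.1, hx.2.le⟩
  have hup := h.pos x ⟨hx.1.le, hx.2⟩
  have hx0 := hx.1
  have hx1 : 0 < 1 - x := by linarith [hx.2]
  have e1 : |(v / slope u 1) x| = |v x| * ((1 - x) / u x) := by
    rw [Pi.div_apply, slope_def_field, h.u_one, abs_div, abs_div, sub_zero, abs_of_pos hup,
      abs_sub_comm, abs_of_pos hx1]
    field_simp
  have e2 : bdG m u v f x = (x ^ (m + 1) * v x / u x) * (∫ t in 1..x, f t) ^ 2 := by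
    unfold bdG; ring
  rw [e2, Real.norm_eq_abs, abs_mul, abs_div, abs_mul, abs_of_pos hup,
    abs_of_nonneg (sq_nonneg (∫ t in 1..x, f t)), abs_of_pos (pow_pos hx0 _)]
  have hx2 := pow_pos hx0 (m + 1)
  calc _ ≤ x ^ (m + 1) * |v x| / u x * ((∫ t in x..1, t ^ (m + 1) * (f t) ^ 2)
        * ((x ^ (m + 1))⁻¹ * (1 - x))) := by
        gcongr
        exact hQ.trans (mul_le_mul_of_nonneg_left hw ht)
    _ = |v x| * ((1 - x) / u x) * (∫ t in x..1, t ^ (m + 1) * (f t) ^ 2) := by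
        field_simp
    _ = _ := by rw [← e1]

lemma W_deriv (h : GPYEig m lam u v v') {x : ℝ} (hx : x ∈ Ioo (0 : ℝ) 1) :
    HasDerivAt (fun x => x ^ (m + 1) * v x / u x)
      (-lam * x ^ m - x ^ (m + 1) * (v x / u x) ^ 2) x := by
  have hup := h.pos x ⟨hx.1.le, hx.2⟩
  have := ((hasDerivAt_pow (m + 1) x).mul (h.dv x)).div (h.du x) hup.ne'
  refine this.congr_deriv ?_
  have ho := h.ode x
  simp only [Nat.add_sub_cancel, Pi.mul_apply]
  push_cast
  field_simp
  linear_combination x ^ m * u x * ho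

lemma G_deriv (h : GPYEig m lam u v v')
    (hf : ∀ x ∈ Set.Ioc (0:ℝ) 1, IntervalIntegrable f volume x 1) :
    ∀ᵐ x, x ∈ Ioo (0 : ℝ) 1 → HasDerivAt (bdG m u v f)
      (x ^ (m + 1) * (f x) ^ 2 - lam * (x ^ m * (∫ t in 1..x, f t) ^ 2) - bdD m u v f x) x := by
  filter_upwards [Q_deriv hf] with x hQ hx
  have hup := h.pos x ⟨hx.1.le, hx.2⟩
  have := (W_deriv h hx).mul ((hQ hx).mul (hQ hx))
  refine this.congr_deriv ?_
  simp only [bdD, Pi.mul_apply]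
  field_simp
  ring

lemma G_ac (h : GPYEig m lam u v v')
    (hf : ∀ x ∈ Set.Ioc (0:ℝ) 1, IntervalIntegrable f volume x 1)
    {a b : ℝ} (ha : 0 < a) (hab : a ≤ b) (hb : b < 1) :
    AbsolutelyContinuousOnInterval (bdG m u v f) a b := by
  have hQ := Q_ac hf (a := a) (b := b) ⟨ha, by linarith⟩ ⟨by linarith, hb.le⟩
  have hW : AbsolutelyContinuousOnInterval (fun x => x ^ (m + 1) * v x / u x) a b := by
    apply ContDiffOn.absolutelyContinuousOnInterval
    rw [uIcc_of_le hab]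
    refine ContDiffOn.div ?_ h.cu.contDiffOn fun x hx => (h.pos x ⟨by linarith [hx.1],
      by linarith [hx.2]⟩).ne'
    exact ((contDiff_id.pow (m + 1)).mul h.cv).contDiffOn
  exact hW.fun_mul (hQ.fun_mul hQ)

lemma D_int_eq (hm : 1 ≤ m) (h : GPYEig m lam u v v')
    (hf : ∀ x ∈ Set.Ioc (0:ℝ) 1, IntervalIntegrable f volume x 1)
    (hE : IntegrableOn (fun x => x ^ (m + 1) * (f x) ^ 2) (Set.Ioc 0 1) volume)
    {a b : ℝ} (ha : 0 < a) (hab : a ≤ b) (hb : b < 1) :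
    IntervalIntegrable (bdD m u v f) volume a b ∧
    ∫ x in a..b, bdD m u v f x =
      (∫ x in a..b, (x ^ (m + 1) * (f x) ^ 2 - lam * (x ^ m * (∫ t in 1..x, f t) ^ 2)))
       - (bdG m u v f b - bdG m u v f a) := by
  have hd : ∀ᵐ x, x ∈ uIcc a b → HasDerivAt (bdG m u v f)
      (x ^ (m + 1) * (f x) ^ 2 - lam * (x ^ m * (∫ t in 1..x, f t) ^ 2) - bdD m u v f x) x := by
    filter_upwards [G_deriv h hf] with x hx hx2
    rw [uIcc_of_le hab] at hx2
    exact hx ⟨by linarith [hx2.1], by linarith [hx2.2]⟩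
  have h1 := ftc_ac (G_ac h hf ha hab hb) hd
  have h2 := ftc_ac_int (G_ac h hf ha hab hb) hd
  have hE' := E_int hE (a := a) (b := b) ⟨ha.le, by linarith⟩ ⟨by linarith, hb.le⟩
  have hV' : IntervalIntegrable (fun x => x ^ m * (∫ t in 1..x, f t) ^ 2) volume a b := by
    rw [intervalIntegrable_iff_integrableOn_Ioc_of_le hab]
    exact (V_int hm hf hE).mono_set (Ioc_subset_Ioc ha.le hb.le)
  have h3 := hE'.sub (hV'.const_mul lam)
  have h4 := h3.sub h2
  have e : (fun x => (x ^ (m + 1) * (f x) ^ 2 - lam * (x ^ m * (∫ t in 1..x, f t) ^ 2)) -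
      (x ^ (m + 1) * (f x) ^ 2 - lam * (x ^ m * (∫ t in 1..x, f t) ^ 2) - bdD m u v f x))
      = bdD m u v f := by
    funext x; ring
  refine ⟨by rw [← e]; exact h4, ?_⟩
  rw [← h1, ← intervalIntegral.integral_sub h3 h2]
  exact intervalIntegral.integral_congr fun x _ => (congrFun e x).symm

lemma D_nonneg {x : ℝ} (hx : 0 < x) : 0 ≤ bdD m u v f x := by
  unfold bdD; positivity

lemma phi_limits (hm : 1 ≤ m) (h : GPYEig m lam u v v')
    (hf : ∀ x ∈ Set.Ioc (0:ℝ) 1, IntervalIntegrable f volume x 1)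
    (hE : IntegrableOn (fun x => x ^ (m + 1) * (f x) ^ 2) (Set.Ioc 0 1) volume) :
    ∃ Φ : ℝ → ℝ, Tendsto Φ (𝓝[>] 0) (𝓝 0) ∧
      Tendsto Φ (𝓝[<] 1) (𝓝 ((∫ x in Ioc (0:ℝ) 1, x ^ (m + 1) * (f x) ^ 2)
        - lam * ∫ x in Ioc (0:ℝ) 1, x ^ m * (∫ t in 1..x, f t) ^ 2)) ∧
      ∀ a b, 0 < a → a ≤ b → b < 1 → ∫ x in a..b, bdD m u v f x = Φ b - Φ a := by
  set g : ℝ → ℝ := fun x =>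
    x ^ (m + 1) * (f x) ^ 2 - lam * (x ^ m * (∫ t in 1..x, f t) ^ 2) with hg
  have hgi : IntegrableOn g (Ioc 0 1) := hE.sub ((V_int hm hf hE).const_mul lam)
  have hgi' : IntervalIntegrable g volume 0 1 :=
    (intervalIntegrable_iff_integrableOn_Ioc_of_le zero_le_one).2 hgi
  have hc : ContinuousOn (fun x => ∫ t in 0..x, g t) (Icc 0 1) := by
    have := intervalIntegral.continuousOn_primitive_interval' hgi' (a := 0) left_mem_uIcc
    rwa [uIcc_of_le zero_le_one] at this
  have hT : ∫ t in 0..1, g t = ((∫ x in Ioc (0:ℝ) 1, x ^ (m + 1) * (f x) ^ 2)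
        - lam * ∫ x in Ioc (0:ℝ) 1, x ^ m * (∫ t in 1..x, f t) ^ 2) := by
    rw [intervalIntegral.integral_of_le zero_le_one, hg,
      integral_sub hE ((V_int hm hf hE).const_mul lam), integral_const_mul]
  refine ⟨fun x => (∫ t in 0..x, g t) - bdG m u v f x, ?_, ?_, ?_⟩
  · have h1 := (hc 0 (left_mem_Icc.2 zero_le_one)).tendsto
    rw [intervalIntegral.integral_same] at h1
    have h2 : Tendsto (fun x => ∫ t in 0..x, g t) (𝓝[>] 0) (𝓝 0) := by
      refine h1.mono_left ?_
      rw [← nhdsWithin_Ioo_eq_nhdsGT (zero_lt_one' ℝ)]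
      exact nhdsWithin_mono _ Ioo_subset_Icc_self
    simpa using h2.sub (G_zero hm h hf hE)
  · have h1 := (hc 1 (right_mem_Icc.2 zero_le_one)).tendsto
    rw [hT] at h1
    have h2 := h1.mono_left (show 𝓝[<] (1:ℝ) ≤ 𝓝[Icc 0 1] 1 by
      rw [← nhdsWithin_Ioo_eq_nhdsLT (zero_lt_one' ℝ)]
      exact nhdsWithin_mono _ Ioo_subset_Icc_self)
    simpa using h2.sub (G_one h hf hE)
  · intro a b ha hab hb
    rw [(D_int_eq hm h hf hE ha hab hb).2]
    have hs : ∀ y ∈ Icc (0 : ℝ) 1, IntervalIntegrable g volume 0 y := by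
      intro y hy
      refine hgi'.mono_set ?_
      rw [uIcc_of_le zero_le_one, uIcc_of_le hy.1]
      exact Icc_subset_Icc le_rfl hy.2
    have := intervalIntegral.integral_interval_sub_left (hs b ⟨by linarith, hb.le⟩)
      (hs a ⟨ha.le, by linarith⟩)
    rw [← this]
    ring

lemma D_le (hm : 1 ≤ m) (h : GPYEig m lam u v v')
    (hf : ∀ x ∈ Set.Ioc (0:ℝ) 1, IntervalIntegrable f volume x 1)
    (hE : IntegrableOn (fun x => x ^ (m + 1) * (f x) ^ 2) (Set.Ioc 0 1) volume)
    {a b : ℝ} (ha : 0 < a) (hab : a ≤ b) (hb : b < 1) :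
    ∫ x in a..b, bdD m u v f x ≤ (∫ x in Ioc (0:ℝ) 1, x ^ (m + 1) * (f x) ^ 2)
        - lam * ∫ x in Ioc (0:ℝ) 1, x ^ m * (∫ t in 1..x, f t) ^ 2 := by
  obtain ⟨Φ, h0, h1, hΦ⟩ := phi_limits hm h hf hE
  have mono : ∀ a b, 0 < a → a ≤ b → b < 1 → Φ a ≤ Φ b := by
    intro a b ha hab hb
    have := hΦ a b ha hab hb
    have h2 : 0 ≤ ∫ x in a..b, bdD m u v f x :=
      intervalIntegral.integral_nonneg hab fun x hx => D_nonneg (ha.trans_le hx.1)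
    linarith
  rw [hΦ a b ha hab hb]
  have hA : 0 ≤ Φ a := by
    refine le_of_tendsto h0 ?_
    filter_upwards [Ioo_mem_nhdsGT ha] with x hx
    exact mono x a hx.1 hx.2.le (by linarith)
  have hB := ge_of_tendsto h1 (b := Φ b) (by
    filter_upwards [Ioo_mem_nhdsLT hb] with x hx
    exact mono b x (by linarith) hx.1.le hx.2)
  linarith

lemma T_eq_zero (hm : 1 ≤ m) (h : GPYEig m lam u v v')
    (hf : ∀ x ∈ Set.Ioc (0:ℝ) 1, IntervalIntegrable f volume x 1)
    (hE : IntegrableOn (fun x => x ^ (m + 1) * (f x) ^ 2) (Set.Ioc 0 1) volume)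
    (hD : ∀ᵐ x, x ∈ Ioo (0 : ℝ) 1 → bdD m u v f x = 0) :
    (∫ x in Ioc (0:ℝ) 1, x ^ (m + 1) * (f x) ^ 2)
        - lam * (∫ x in Ioc (0:ℝ) 1, x ^ m * (∫ t in 1..x, f t) ^ 2) = 0 := by
  obtain ⟨Φ, h0, h1, hΦ⟩ := phi_limits hm h hf hE
  have hz : ∀ a b, 0 < a → a ≤ b → b < 1 → Φ b = Φ a := by
    intro a b ha hab hb
    have h2 : ∫ x in a..b, bdD m u v f x = 0 := by
      rw [intervalIntegral.integral_congr_ae (g := fun _ => 0)]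
      · simp
      · filter_upwards [hD] with x hx hx2
        rw [uIoc_of_le hab] at hx2
        exact hx ⟨by linarith [hx2.1], by linarith [hx2.2]⟩
    have := hΦ a b ha hab hb
    linarith
  have e0 : Φ (1 / 2) = 0 := by
    refine tendsto_nhds_unique (tendsto_const_nhds.congr' ?_) h0
    filter_upwards [Ioo_mem_nhdsGT (show (0 : ℝ) < 1 / 2 by norm_num)] with x hx
    exact hz x (1 / 2) hx.1 hx.2.le (by norm_num)
  refine tendsto_nhds_unique h1 (tendsto_const_nhds.congr' ?_)
  filter_upwards [Ioo_mem_nhdsLT (show (1 / 2 : ℝ) < 1 by norm_num)] with x hx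
  rw [hz (1 / 2) x (by norm_num) hx.1.le hx.2, e0]

lemma eq_of_T (hm : 1 ≤ m) (h : GPYEig m lam u v v')
    (hf : ∀ x ∈ Set.Ioc (0:ℝ) 1, IntervalIntegrable f volume x 1)
    (hE : IntegrableOn (fun x => x ^ (m + 1) * (f x) ^ 2) (Set.Ioc 0 1) volume)
    (hT : (∫ x in Ioc (0:ℝ) 1, x ^ (m + 1) * (f x) ^ 2)
        - lam * (∫ x in Ioc (0:ℝ) 1, x ^ m * (∫ t in 1..x, f t) ^ 2) = 0) :
    ∃ c : ℝ, ∀ x ∈ Ioc (0 : ℝ) 1, ∫ t in 1..x, f t = c * u x := by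
  have hconst : ∀ a b, 0 < a → a ≤ b → b < 1 →
      (∫ t in 1..a, f t) / u a = (∫ t in 1..b, f t) / u b := by
    intro a b ha hab hb
    have hi := (D_int_eq hm h hf hE ha hab hb).1
    have hz : ∫ x in a..b, bdD m u v f x = 0 := by
      refine le_antisymm ((D_le hm h hf hE ha hab hb).trans_eq hT) ?_
      exact intervalIntegral.integral_nonneg hab fun x hx => D_nonneg (ha.trans_le hx.1)
    rw [intervalIntegral.integral_of_le hab] at hz
    rw [intervalIntegrable_iff_integrableOn_Ioc_of_le hab] at hi
    rw [setIntegral_eq_zero_iff_of_nonneg_ae ?_ hi] at hz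
    swap
    · filter_upwards [ae_restrict_mem measurableSet_Ioc] with x hx
      exact D_nonneg (ha.trans hx.1)
    rw [Filter.EventuallyEq, ae_restrict_iff' measurableSet_Ioc] at hz
    have hac : AbsolutelyContinuousOnInterval (fun x => (∫ t in 1..x, f t) * (u x)⁻¹) a b := by
      refine (Q_ac hf (a := a) (b := b) ⟨ha, by linarith⟩ ⟨by linarith, hb.le⟩).fun_mul ?_
      apply ContDiffOn.absolutelyContinuousOnInterval
      rw [uIcc_of_le hab]
      exact ContDiffOn.inv h.cu.contDiffOn fun x hx => (h.pos x ⟨by linarith [hx.1],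
        by linarith [hx.2]⟩).ne'
    have hae : ∀ᵐ x : ℝ, x ≠ a := by simp [ae_iff, measure_singleton]
    obtain ⟨C, hC⟩ := hac.const_of_ae_hasDerivAt_zero (by
      filter_upwards [hz, Q_deriv hf, hae] with x hx1 hx2 hx3 hx4
      rw [uIcc_of_le hab] at hx4
      have hx5 : x ∈ Ioc a b := ⟨lt_of_le_of_ne hx4.1 (Ne.symm hx3), hx4.2⟩
      have hx6 : x ∈ Ioo (0 : ℝ) 1 := ⟨ha.trans hx5.1, hx5.2.trans_lt hb⟩
      have hup := h.pos x ⟨hx6.1.le, hx6.2⟩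
      have := (hx2 hx6).mul ((h.du x).inv hup.ne')
      refine this.congr_deriv ?_
      have h0 := hx1 hx5
      simp only [bdD, Pi.zero_apply, mul_eq_zero, pow_eq_zero_iff, ne_eq, Nat.add_eq_zero_iff,
        one_ne_zero, and_false, not_false_eq_true, hx6.1.ne', false_or, OfNat.ofNat_ne_zero] at h0
      have h1 : f x = (∫ t in 1..x, f t) * v x / u x := by linarith
      simp only [Pi.inv_apply]
      rw [h1]
      field_simp
      ring)
    have h1 := hC a left_mem_uIcc
    have h2 := hC b right_mem_uIcc
    simp only [← div_eq_mul_inv] at h1 h2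
    rw [h1, h2]
  refine ⟨(∫ t in 1..(1 / 2), f t) / u (1 / 2), fun x hx => ?_⟩
  rcases hx.2.eq_or_lt with rfl | hx1
  · simp [h.u_one]
  · have hup := h.pos x ⟨hx.1.le, hx1⟩
    have : (∫ t in 1..(1 / 2), f t) / u (1 / 2) = (∫ t in 1..x, f t) / u x := by
      rcases le_total x (1 / 2) with hl | hl
      · exact (hconst x (1 / 2) hx.1 hl (by norm_num)).symm
      · exact hconst (1 / 2) x (by norm_num) hl hx1
    rw [this]
    field_simp

lemma T_of_eq (hm : 1 ≤ m) (h : GPYEig m lam u v v')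
    (hf : ∀ x ∈ Set.Ioc (0:ℝ) 1, IntervalIntegrable f volume x 1)
    (hE : IntegrableOn (fun x => x ^ (m + 1) * (f x) ^ 2) (Set.Ioc 0 1) volume)
    {c : ℝ} (hc : ∀ x ∈ Ioc (0 : ℝ) 1, ∫ t in 1..x, f t = c * u x) :
    (∫ x in Ioc (0:ℝ) 1, x ^ (m + 1) * (f x) ^ 2)
        - lam * (∫ x in Ioc (0:ℝ) 1, x ^ m * (∫ t in 1..x, f t) ^ 2) = 0 := by
  apply T_eq_zero hm h hf hE
  filter_upwards [Q_deriv hf] with x hx hx1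
  have hup := h.pos x ⟨hx1.1.le, hx1.2⟩
  have h1 : HasDerivAt (fun x => ∫ t in 1..x, f t) (c * v x) x := by
    refine ((h.du x).const_mul c).congr_of_eventuallyEq ?_
    filter_upwards [Ioo_mem_nhds hx1.1 hx1.2] with y hy
    exact hc y ⟨hy.1, hy.2.le⟩
  have h2 := (hx hx1).unique h1
  have h3 := hc x ⟨hx1.1, hx1.2.le⟩
  rw [bdD, h3, h2]
  field_simp
  simp

end Picone

lemma q1_eq (m : ℕ) (α x : ℝ) (hx : 0 < x) :
    x ^ (-(((m + 2 : ℕ) : ℝ) - 2) / 2) * besselJ m (α * Real.sqrt x)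
      = (α / 2) ^ m * bF m (α ^ 2 / 4 * x) := by
  rw [besselJ_eq]
  have e1 : (α * Real.sqrt x / 2) ^ 2 = α ^ 2 / 4 * x := by
    rw [div_pow, mul_pow, Real.sq_sqrt hx.le]; ring
  have e2 : x ^ (-(((m + 2 : ℕ) : ℝ) - 2) / 2) * Real.sqrt x ^ m = 1 := by
    rw [Real.sqrt_eq_rpow, ← Real.rpow_natCast, ← Real.rpow_mul hx.le, ← Real.rpow_add hx]
    push_cast
    rw [show (-((m : ℝ) + 2 - 2) / 2 + 1 / 2 * m) = 0 by ring, Real.rpow_zero]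
  rw [e1, show (α * Real.sqrt x / 2) ^ m = Real.sqrt x ^ m * (α / 2) ^ m by
    rw [← mul_pow]; ring, ← mul_assoc, ← mul_assoc, e2, one_mul]

lemma gpyEig_bessel (m : ℕ) (α : ℝ) (hα_pos : 0 < α) (hα_zero : besselJ m α = 0)
    (hα_min : ∀ β : ℝ, 0 < β → besselJ m β = 0 → α ≤ β) :
    GPYEig m (α ^ 2 / 4) (fun x => bF m (α ^ 2 / 4 * x))
      (fun x => -(α ^ 2 / 4) * bF (m + 1) (α ^ 2 / 4 * x))
      (fun x => (α ^ 2 / 4) ^ 2 * bF (m + 2) (α ^ 2 / 4 * x)) := by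
  have hd : ∀ (m : ℕ) (x : ℝ), HasDerivAt (fun x => bF m (α ^ 2 / 4 * x))
      (-(α ^ 2 / 4) * bF (m + 1) (α ^ 2 / 4 * x)) x := by
    intro m x
    have := (bF_hasDerivAt m (α ^ 2 / 4 * x)).comp x ((hasDerivAt_id x).const_mul (α ^ 2 / 4))
    refine this.congr_deriv ?_
    ring
  have hc : ∀ m : ℕ, ContDiff ℝ 1 (fun x => bF m (α ^ 2 / 4 * x)) := fun m =>
    (bF_contDiff m).comp (contDiff_const.mul contDiff_id)
  refine ⟨by positivity, hd m, fun x => ?_, hc m, contDiff_const.mul (hc (m + 1)), fun x => ?_,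
    fun x hx => ?_, ?_⟩
  · refine ((hd (m + 1) x).const_mul (-(α ^ 2 / 4))).congr_deriv ?_
    ring
  · have := bF_rec m (α ^ 2 / 4 * x)
    simp only [this]
    ring
  · by_contra hcon
    push Not at hcon
    have hcont : ContinuousOn (fun x => bF m (α ^ 2 / 4 * x)) (Icc 0 x) :=
      (hc m).continuous.continuousOn
    have h0 : 0 < bF m (α ^ 2 / 4 * 0) := by rw [mul_zero]; exact bF_zero_pos m
    obtain ⟨z, hz, hz0⟩ := intermediate_value_Icc' hx.1 hcont ⟨hcon, h0.le⟩
    simp only at hz0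
    have hzpos : 0 < z := by
      rcases hz.1.eq_or_lt with h | h
      · rw [← h] at hz0; exact absurd hz0 h0.ne'
      · exact h
    have hs := Real.sqrt_pos.2 hzpos
    have hb : besselJ m (α * Real.sqrt z) = 0 := by
      rw [besselJ_eq, show (α * Real.sqrt z / 2) ^ 2 = α ^ 2 / 4 * z by
        rw [div_pow, mul_pow, Real.sq_sqrt hzpos.le]; ring, hz0, mul_zero]
    have h1 := hα_min _ (by positivity) hb
    have h2 : Real.sqrt z < 1 := by
      rw [Real.sqrt_lt' one_pos]; linarith [hz.2, hx.2]
    nlinarith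
  · rw [besselJ_eq] at hα_zero
    have : (α / 2) ^ m ≠ 0 := by positivity
    have := (mul_eq_zero.1 hα_zero).resolve_left this
    simp only [mul_one]
    rw [← this]
    congr 1
    ring

/-- Let `k ≥ 3`, `m := k-2`, and let `α` be the smallest positive zero
of the Bessel function `J_m`.  Then the supremum `S(k)` of the GPY ratios over the
admissible class equals `4(k-1)/α²`, the supremum is attained, and the maximizers are
exactly the nonzero constant multiples of `q₁(x) := x^(-m/2) J_m(α √x)`, which is
strictly positive on `(0,1)`. -/
theorem gpy_extremal_value_and_maximizer (k : ℕ) (hk : 3 ≤ k)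
    (α : ℝ) (hα_pos : 0 < α) (hα_zero : besselJ (k - 2) α = 0)
    (hα_min : ∀ β : ℝ, 0 < β → besselJ (k - 2) β = 0 → α ≤ β)
    (S : ℝ)
    (hS : S = sSup {r : ℝ | ∃ q q' : ℝ → ℝ, GPYAdmissible k q q' ∧ r = GPYRatio k q q'})
    (q₁ : ℝ → ℝ)
    (hq₁ : q₁ = fun x => x ^ (-((k : ℝ) - 2) / 2) * besselJ (k - 2) (α * Real.sqrt x)) :
    S = 4 * ((k : ℝ) - 1) / α ^ 2 ∧
    (∃ q q' : ℝ → ℝ, GPYAdmissible k q q' ∧ GPYRatio k q q' = S) ∧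
    (∀ q q' : ℝ → ℝ, GPYAdmissible k q q' →
      (GPYRatio k q q' = S ↔ ∃ c : ℝ, c ≠ 0 ∧ ∀ x ∈ Set.Ioc (0:ℝ) 1, q x = c * q₁ x)) ∧
    (∀ x ∈ Set.Ioo (0:ℝ) 1, 0 < q₁ x) := by
  obtain ⟨m, rfl⟩ : ∃ m, k = m + 2 := ⟨k - 2, by omega⟩
  have hm : 1 ≤ m := by omega
  have e1 : m + 2 - 1 = m + 1 := rfl
  have e2 : m + 2 - 2 = m := rfl
  rw [e2] at hα_zero hα_min hq₁
  have h := gpyEig_bessel m α hα_pos hα_zero hα_min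
  set lam : ℝ := α ^ 2 / 4 with hlam
  set u : ℝ → ℝ := fun x => bF m (lam * x) with hu
  set v : ℝ → ℝ := fun x => -lam * bF (m + 1) (lam * x) with hv
  have hlp := h.lam_pos
  have hA : 0 < (α / 2) ^ m := by positivity
  have hq : ∀ x, 0 < x → q₁ x = (α / 2) ^ m * u x := by
    intro x hx
    rw [hq₁]
    exact q1_eq m α x hx
  have hval : 4 * (((m + 2 : ℕ) : ℝ) - 1) / α ^ 2 = ((m : ℝ) + 1) / lam := by
    rw [hlam]; push_cast; field_simp; ring
  rw [hval]
  -- general facts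
  have gen : ∀ q q' : ℝ → ℝ, GPYAdmissible (m + 2) q q' →
      (GPYRatio (m + 2) q q' ≤ ((m : ℝ) + 1) / lam) ∧
      (GPYRatio (m + 2) q q' = ((m : ℝ) + 1) / lam ↔
        ∃ c : ℝ, c ≠ 0 ∧ ∀ x ∈ Set.Ioc (0:ℝ) 1, q x = c * q₁ x) := by
    intro q f hadm
    obtain ⟨hf, hqf, hE, hpos⟩ := hadm
    rw [e1] at hE hpos
    have hqQ : ∀ x ∈ Ioc (0 : ℝ) 1, q x = ∫ t in 1..x, f t := by
      intro x hx
      rw [hqf x hx, intervalIntegral.integral_symm, neg_neg]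
    have hVeq : ∫ x in Set.Ioc (0:ℝ) 1, x ^ m * (q x) ^ 2 =
        ∫ x in Set.Ioc (0:ℝ) 1, x ^ m * (∫ t in 1..x, f t) ^ 2 :=
      setIntegral_congr_fun measurableSet_Ioc fun x hx => by simp only [hqQ x hx]
    have hT : 0 ≤ (∫ x in Ioc (0:ℝ) 1, x ^ (m + 1) * (f x) ^ 2)
        - lam * ∫ x in Ioc (0:ℝ) 1, x ^ m * (∫ t in 1..x, f t) ^ 2 := by
      have := D_le hm h hf hE (a := 1 / 2) (b := 1 / 2) (by norm_num) le_rfl (by norm_num)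
      simpa using this
    have hfwd := eq_of_T hm h hf hE
    have hbwd := fun c => T_of_eq hm h hf hE (c := c)
    have hR : GPYRatio (m + 2) q f = ((m : ℝ) + 1) *
        (∫ x in Ioc (0:ℝ) 1, x ^ m * (∫ t in 1..x, f t) ^ 2) /
        (∫ x in Ioc (0:ℝ) 1, x ^ (m + 1) * (f x) ^ 2) := by
      rw [GPYRatio, e1, e2, hVeq]
      push_cast
      congr 2
      ring
    have hVz : (∀ x ∈ Ioc (0 : ℝ) 1, ∫ t in 1..x, f t = 0) →
        ∫ x in Ioc (0:ℝ) 1, x ^ m * (∫ t in 1..x, f t) ^ 2 = 0 := by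
      intro hz
      rw [setIntegral_congr_fun (g := fun _ => (0 : ℝ)) measurableSet_Ioc
        (fun x hx => by simp [hz x hx])]
      simp
    set K := ∫ x in Ioc (0:ℝ) 1, x ^ (m + 1) * (f x) ^ 2
    set V := ∫ x in Ioc (0:ℝ) 1, x ^ m * (∫ t in 1..x, f t) ^ 2
    have hm1 : (0 : ℝ) < (m : ℝ) + 1 := by positivity
    have hiff : GPYRatio (m + 2) q f = ((m : ℝ) + 1) / lam ↔ K - lam * V = 0 := by
      rw [hR, div_eq_div_iff hpos.ne' hlp.ne']
      constructor
      · intro hh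
        have : ((m : ℝ) + 1) * (K - lam * V) = 0 := by linarith
        exact (mul_eq_zero.1 this).resolve_left hm1.ne'
      · intro hh
        linear_combination -((m : ℝ) + 1) * hh
    refine ⟨?_, hiff.trans ⟨?_, ?_⟩⟩
    · rw [hR, div_le_div_iff₀ hpos hlp]
      nlinarith
    · intro hh
      obtain ⟨c, hc⟩ := hfwd hh
      have hc0 : c ≠ 0 := by
        rintro rfl
        have := hVz fun x hx => by rw [hc x hx, zero_mul]
        rw [this] at hh
        linarith
      refine ⟨c / (α / 2) ^ m, div_ne_zero hc0 hA.ne', fun x hx => ?_⟩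
      rw [hqQ x hx, hc x hx, hq x hx.1]
      field_simp
    · rintro ⟨c, -, hc⟩
      refine hbwd (c * (α / 2) ^ m) fun x hx => ?_
      rw [← hqQ x hx, hc x hx, hq x hx.1]
      ring
  -- the extremal function
  have hvc : Continuous v := h.cv.continuous
  have hadm : GPYAdmissible (m + 2) u v := by
    have hcE : Continuous fun x => x ^ (m + 1) * (v x) ^ 2 := by fun_prop
    refine ⟨fun x _ => hvc.intervalIntegrable _ _, fun x _ => ?_, ?_, ?_⟩
    · rw [intervalIntegral.integral_eq_sub_of_hasDerivAt (fun y _ => h.du y)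
        (hvc.intervalIntegrable _ _), h.u_one]
      ring
    · rw [e1]
      exact hcE.integrableOn_Ioc
    · rw [e1, ← intervalIntegral.integral_of_le zero_le_one]
      refine intervalIntegral.intervalIntegral_pos_of_pos_on (hcE.intervalIntegrable _ _)
        (fun x hx => ?_) one_pos
      have := h.v_neg x ⟨hx.1, hx.2.le⟩
      have := hx.1
      have : 0 < (v x) ^ 2 := by nlinarith [h.v_neg x ⟨hx.1, hx.2.le⟩]
      positivity
  have hatt : GPYRatio (m + 2) u v = ((m : ℝ) + 1) / lam := by
    rw [(gen u v hadm).2]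
    refine ⟨((α / 2) ^ m)⁻¹, inv_ne_zero hA.ne', fun x hx => ?_⟩
    rw [hq x hx.1]
    field_simp
  have hSval : S = ((m : ℝ) + 1) / lam := by
    rw [hS]
    refine IsGreatest.csSup_eq ⟨⟨u, v, hadm, hatt.symm⟩, ?_⟩
    rintro r ⟨q, q', hqq, rfl⟩
    exact (gen q q' hqq).1
  refine ⟨hSval, ⟨u, v, hadm, by rw [hatt, hSval]⟩, fun q q' hqq => ?_, fun x hx => ?_⟩
  · rw [hSval]
    exact (gen q q' hqq).2
  · rw [hq x hx.1]
    exact mul_pos hA (h.pos x ⟨hx.1.le, hx.2⟩)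
end
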